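/- Let A be a unital C*-algebra, J ⊆ A a closed two-sided ideal, and X ⊆ A an operator system. Let Π : B(X,J) → B(H) be a unital *-representation annihilating M₂(J), and let π : C*(X)+J → B(H) be the unique *-representation annihilating J such that the pair (Π,π) is (X,J)-adapted. Then the following are equivalent: (i) Π has the unique extension property with respect to S(X,J); (ii) π is the unique contractive completely positive extension of π|_X to C*(X)+J. -/

import Mathlib

noncomputable section

namespace ArvesonCounterexample

/-- The C*-subalgebra of `A` generated by a subset `X`. -/
def cstarGen (A : Type*) [CStarAlgebra A] (X : Set A) : StarSubalgebra ℂ A :=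
  (StarAlgebra.adjoin ℂ X).topologicalClosure

/-- The set `J + ℂ·1`. -/
def unitize (A : Type*) [CStarAlgebra A] (J : Set A) : Set A :=
  {d | ∃ j ∈ J, ∃ c : ℂ, d = j + c • (1 : A)}

/-- The operator system `S(X,J)` inside `M₂(A)`, consisting of the matrices
`[[x, j], [k, b]]` with `x ∈ X`, `j, k ∈ J` and `b ∈ J + ℂ1`. -/
def opSys (A : Type*) [CStarAlgebra A] (X J : Set A) : Set (Matrix (Fin 2) (Fin 2) A) :=
  {m | m 0 0 ∈ X ∧ m 0 1 ∈ J ∧ m 1 0 ∈ J ∧ m 1 1 ∈ unitize A J}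

/-- The C*-algebra `B(X,J)` generated by `S(X,J)` inside `M₂(A)`. -/
def calg (A : Type*) [CStarAlgebra A] (X J : Set A) :
    StarSubalgebra ℂ (Matrix (Fin 2) (Fin 2) A) :=
  (StarAlgebra.adjoin ℂ (opSys A X J)).topologicalClosure

/-- The C*-subalgebra `C*(X) + J` of `A` (the C*-algebra generated by `C*(X)` and `J`;
since `J` is a closed two-sided ideal this coincides with the sum `C*(X) + J`). -/
def cstarPlus (A : Type*) [CStarAlgebra A] (X J : Set A) : StarSubalgebra ℂ A :=
  (StarAlgebra.adjoin ℂ ((cstarGen A X : Set A) ∪ J)).topologicalClosure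

/-- `J` is a closed two-sided ideal of `A`. -/
structure IsClosedTwoSidedIdeal {A : Type*} [CStarAlgebra A] (J : Set A) : Prop where
  zero_mem : (0 : A) ∈ J
  add_mem : ∀ x ∈ J, ∀ y ∈ J, x + y ∈ J
  mul_mem_left : ∀ (a : A), ∀ j ∈ J, a * j ∈ J
  mul_mem_right : ∀ (a : A), ∀ j ∈ J, j * a ∈ J
  isClosed : IsClosed J

/-- `X` is an operator system in `A`: a unital norm-closed self-adjoint subspace. -/
structure IsOperatorSystem {A : Type*} [CStarAlgebra A] (X : Set A) : Prop where
  one_mem : (1 : A) ∈ X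
  add_mem : ∀ x ∈ X, ∀ y ∈ X, x + y ∈ X
  smul_mem : ∀ (c : ℂ), ∀ x ∈ X, c • x ∈ X
  star_mem : ∀ x ∈ X, star x ∈ X
  isClosed : IsClosed X

/-- A map `φ` between star rings is completely positive if each matrix amplification maps
positive elements to positive elements (positivity expressed algebraically as being of the
form `star y * y`). -/
def IsCompletelyPositive {R B : Type*} [Ring R] [StarRing R] [Ring B] [StarRing B]
    (φ : R → B) : Prop :=
  ∀ (n : ℕ) (y : Matrix (Fin n) (Fin n) R),
    ∃ z : Matrix (Fin n) (Fin n) B, (star y * y).map φ = star z * z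

/-- A unital completely positive (linear) map from `R` to `B(H)`. -/
structure IsUCPMap {R : Type*} [Ring R] [Algebra ℂ R] [StarRing R]
    {H : Type*} [NormedAddCommGroup H] [InnerProductSpace ℂ H] [CompleteSpace H]
    (φ : R → (H →L[ℂ] H)) : Prop where
  map_add : ∀ x y, φ (x + y) = φ x + φ y
  map_smul : ∀ (c : ℂ) (x : R), φ (c • x) = c • φ x
  cp : IsCompletelyPositive φ
  map_one : φ 1 = 1

/-- A (not necessarily unital) *-representation of `R` on `B(H)`. -/
structure IsStarRep {R : Type*} [Ring R] [Algebra ℂ R] [StarRing R]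
    {H : Type*} [NormedAddCommGroup H] [InnerProductSpace ℂ H] [CompleteSpace H]
    (π : R → (H →L[ℂ] H)) : Prop where
  map_add : ∀ x y, π (x + y) = π x + π y
  map_smul : ∀ (c : ℂ) (x : R), π (c • x) = c • π x
  map_mul : ∀ x y, π (x * y) = π x * π y
  map_star : ∀ x, π (star x) = star (π x)

/-- A unital *-representation of `R` on `B(H)`. -/
structure IsUnitalStarRep {R : Type*} [Ring R] [Algebra ℂ R] [StarRing R]
    {H : Type*} [NormedAddCommGroup H] [InnerProductSpace ℂ H] [CompleteSpace H]
    (π : R → (H →L[ℂ] H)) : Prop where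
  toIsStarRep : IsStarRep π
  map_one : π 1 = 1

/-- A unital *-representation `ρ` of `B(X,J)` has the unique extension property with respect
to `S(X,J)` if every unital completely positive map on `B(X,J)` agreeing with `ρ` on
`S(X,J)` equals `ρ`. -/
def HasUEP {A : Type*} [CStarAlgebra A] (X J : Set A)
    {H : Type*} [NormedAddCommGroup H] [InnerProductSpace ℂ H] [CompleteSpace H]
    (ρ : ↥(calg A X J) → (H →L[ℂ] H)) : Prop :=
  ∀ Ψ : ↥(calg A X J) → (H →L[ℂ] H), IsUCPMap Ψ →
    (∀ m : ↥(calg A X J), (m : Matrix (Fin 2) (Fin 2) A) ∈ opSys A X J → Ψ m = ρ m) →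
    Ψ = ρ

/-- `ρ` annihilates the ideal `M₂(J)` of `B(X,J)`. -/
def AnnihilatesM2 {A : Type*} [CStarAlgebra A] (X J : Set A)
    {H : Type*} [NormedAddCommGroup H] [InnerProductSpace ℂ H] [CompleteSpace H]
    (ρ : ↥(calg A X J) → (H →L[ℂ] H)) : Prop :=
  ∀ m : ↥(calg A X J), (∀ i j : Fin 2, (m : Matrix (Fin 2) (Fin 2) A) i j ∈ J) → ρ m = 0

/-- `π` (defined on `C*(X)+J`) annihilates `J`. -/
def AnnihilatesJ {A : Type*} [CStarAlgebra A] (X J : Set A)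
    {H : Type*} [NormedAddCommGroup H] [InnerProductSpace ℂ H] [CompleteSpace H]
    (π : ↥(cstarPlus A X J) → (H →L[ℂ] H)) : Prop :=
  ∀ x : ↥(cstarPlus A X J), (x : A) ∈ J → π x = 0

/-- The pair `(ρ, π)` is `(X,J)`-adapted: writing an element of `B(X,J)` as `[[a,b],[c,d]]`
with `a ∈ C*(X)+J`, `b, c ∈ J`, `d ∈ J + ℂ1`, and letting `χ : J + ℂ1 → ℂ` be the quotient
character with kernel `J` (so `χ d = c` exactly when `d - c•1 ∈ J`), one has
`ρ [[a,b],[c,d]] - χ(d)•1 = π (a - χ(d)•1)`. -/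
def IsAdaptedPair {A : Type*} [CStarAlgebra A] (X J : Set A)
    {H : Type*} [NormedAddCommGroup H] [InnerProductSpace ℂ H] [CompleteSpace H]
    (ρ : ↥(calg A X J) → (H →L[ℂ] H)) (π : ↥(cstarPlus A X J) → (H →L[ℂ] H)) : Prop :=
  ∀ (m : ↥(calg A X J)) (c : ℂ) (a' : ↥(cstarPlus A X J)),
    (m : Matrix (Fin 2) (Fin 2) A) 1 1 - c • (1 : A) ∈ J →
    (a' : A) = (m : Matrix (Fin 2) (Fin 2) A) 0 0 - c • (1 : A) →
    ρ m - c • (1 : H →L[ℂ] H) = π a'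

theorem approx_aux {A : Type*} [CStarAlgebra A] (a : A) {ε : ℝ} (hε : 0 < ε) :
    ∃ g : A, ‖a - a * ((star a * a) * g)‖ ^ 2 ≤ ε := by
  have hsp : ∀ x ∈ spectrum ℝ (star a * a), 0 ≤ x := fun x hx => spectrum_star_mul_self_nonneg x hx
  have hsa : IsSelfAdjoint (star a * a) := IsSelfAdjoint.star_mul_self a
  obtain ⟨h, hh⟩ : ∃ h, h = star a * a := ⟨_, rfl⟩
  rw [← hh] at hsp hsa ⊢
  have hne : ∀ x ∈ spectrum ℝ h, x + ε ≠ 0 := fun x hx => by have := hsp x hx; positivity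
  have hc : ContinuousOn (fun t : ℝ => (t + ε)⁻¹) (spectrum ℝ h) :=
    ContinuousOn.inv₀ (by fun_prop) hne
  have ht : ContinuousOn (fun t : ℝ => t * (t + ε)⁻¹) (spectrum ℝ h) := continuousOn_id.mul hc
  have hk : ContinuousOn (fun t : ℝ => ε * (t + ε)⁻¹) (spectrum ℝ h) := continuousOn_const.mul hc
  refine ⟨cfc (fun t : ℝ => (t + ε)⁻¹) h, ?_⟩
  have h1 : (1 : A) - h * cfc (fun t : ℝ => (t + ε)⁻¹) h = cfc (fun t : ℝ => ε * (t + ε)⁻¹) h := by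
    have e1 : h * cfc (fun t : ℝ => (t + ε)⁻¹) h = cfc (fun t : ℝ => t * (t + ε)⁻¹) h := by
      rw [cfc_mul (fun t : ℝ => t) (fun t : ℝ => (t + ε)⁻¹) h continuousOn_id hc, cfc_id' ℝ h hsa]
    have e2 : (1 : A) = cfc (fun t : ℝ => (1 : ℝ)) h := by rw [cfc_const_one ℝ h hsa]
    rw [e1, e2, ← cfc_sub (fun t : ℝ => (1 : ℝ)) (fun t : ℝ => t * (t + ε)⁻¹) h
      continuousOn_const ht]
    refine cfc_congr fun t ht => ?_
    have := hne t ht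
    field_simp
    ring
  have h2 : a - a * (h * cfc (fun t : ℝ => (t + ε)⁻¹) h)
      = a * cfc (fun t : ℝ => ε * (t + ε)⁻¹) h := by rw [← h1]; noncomm_ring
  rw [h2, sq, ← CStarRing.norm_star_mul_self]
  have h3 : star (a * cfc (fun t : ℝ => ε * (t + ε)⁻¹) h) * (a * cfc (fun t : ℝ => ε * (t + ε)⁻¹) h)
      = cfc (fun t : ℝ => ε * (t + ε)⁻¹ * (t * (ε * (t + ε)⁻¹))) h := by
    rw [cfc_mul (fun t : ℝ => ε * (t + ε)⁻¹) (fun t : ℝ => (t * (ε * (t + ε)⁻¹))) h hk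
      (continuousOn_id.mul hk),
      cfc_mul (fun t : ℝ => t) (fun t : ℝ => (ε * (t + ε)⁻¹)) h continuousOn_id hk, cfc_id' ℝ h hsa, star_mul,
      (cfc_predicate (fun t : ℝ => ε * (t + ε)⁻¹) h : IsSelfAdjoint _).star_eq, hh]
    noncomm_ring
  rw [h3]
  refine norm_cfc_le hε.le fun t ht => ?_
  have ht0 := hsp t ht
  rw [Real.norm_of_nonneg (by positivity)]
  have : 0 < t + ε := by positivity
  have e : ε * (t + ε)⁻¹ * (t * (ε * (t + ε)⁻¹)) = ε * ((ε / (t+ε)) * (t / (t+ε))) := by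
    field_simp
  rw [e]
  have h5 : ε / (t+ε) ≤ 1 := by rw [div_le_one this]; linarith
  have h6 : t / (t+ε) ≤ 1 := by rw [div_le_one this]; linarith
  calc _ ≤ ε * 1 := by gcongr; exact mul_le_one₀ h5 (by positivity) h6
    _ = ε := mul_one _

theorem sqrt_aux {A : Type*} [CStarAlgebra A] (a : A) :
    ∃ s : A, star s * s = ((‖a‖ ^ 2 : ℝ) : ℂ) • (1 : A) - star a * a := by
  let _ := CStarAlgebra.spectralOrder A
  have := CStarAlgebra.spectralOrderedRing A
  have h := CStarAlgebra.star_mul_le_algebraMap_norm_sq (a := a)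
  obtain ⟨s, hs⟩ := CStarAlgebra.nonneg_iff_eq_star_mul_self.1 (sub_nonneg.2 h)
  refine ⟨s, ?_⟩
  rw [← hs, Algebra.algebraMap_eq_smul_one, Complex.coe_smul]

theorem sum_aux0 {B : Type*} [CStarAlgebra B] (x y : B) :
    ∃ z : B, star x * x + star y * y = star z * z := by
  let _ := CStarAlgebra.spectralOrder B
  have := CStarAlgebra.spectralOrderedRing B
  exact CStarAlgebra.nonneg_iff_eq_star_mul_self.1
    (add_nonneg (star_mul_self_nonneg x) (star_mul_self_nonneg y))

theorem sum_aux {B : Type*} [CStarAlgebra B] {n : ℕ} (x y : Matrix (Fin n) (Fin n) B) :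
    ∃ z : Matrix (Fin n) (Fin n) B, star x * x + star y * y = star z * z := by
  let _ := CStarAlgebra.spectralOrder B
  have := CStarAlgebra.spectralOrderedRing B
  exact sum_aux0 (B := CStarMatrix (Fin n) (Fin n) B) x y

theorem mem_of_approx {A : Type*} [CStarAlgebra A] {S : Set A} (hS : IsClosed S) (a : A)
    (h : ∀ g : A, a * ((star a * a) * g) ∈ S) : a ∈ S := by
  rw [← hS.closure_eq, Metric.mem_closure_iff]
  intro ε hε
  obtain ⟨g, hg⟩ := approx_aux a (ε := (ε / 2) ^ 2) (by positivity)
  refine ⟨_, h g, ?_⟩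
  rw [dist_eq_norm]
  have := abs_le_of_sq_le_sq hg (by positivity)
  linarith [this, le_abs_self ‖a - a * ((star a * a) * g)‖]

section structural

variable {A : Type*} [CStarAlgebra A] {X J : Set A}

theorem IsClosedTwoSidedIdeal.star_mem (hJ : IsClosedTwoSidedIdeal J) {j : A} (hj : j ∈ J) :
    star j ∈ J := by
  refine mem_of_approx hJ.isClosed _ fun g => ?_
  rw [star_star]
  exact hJ.mul_mem_left _ _ (hJ.mul_mem_right _ _ (hJ.mul_mem_right _ _ hj))

theorem IsClosedTwoSidedIdeal.smul_mem (hJ : IsClosedTwoSidedIdeal J) (c : ℂ) {j : A}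
    (hj : j ∈ J) : c • j ∈ J := by
  have := hJ.mul_mem_left (c • (1 : A)) _ hj
  simpa using this

theorem IsClosedTwoSidedIdeal.sub_mem (hJ : IsClosedTwoSidedIdeal J) {j k : A}
    (hj : j ∈ J) (hk : k ∈ J) : j - k ∈ J := by
  have := hJ.add_mem _ hj _ (hJ.smul_mem (-1) hk)
  simpa [sub_eq_add_neg] using this

theorem isClosed_unitize (hJ : IsClosedTwoSidedIdeal J) : IsClosed (unitize A J) := by
  let s : Submodule ℂ A :=
    { carrier := J
      add_mem' := fun ha hb => hJ.add_mem _ ha _ hb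
      zero_mem' := hJ.zero_mem
      smul_mem' := fun c _ hx => hJ.smul_mem c hx }
  have h := Submodule.isClosed_sup_finiteDimensional s (Submodule.span ℂ {(1 : A)}) hJ.isClosed
  convert h using 1
  ext d
  simp only [unitize, Set.mem_ofPred_eq, SetLike.mem_coe, Submodule.mem_sup,
    Submodule.mem_span_singleton]
  constructor
  · rintro ⟨j, hj, c, rfl⟩
    exact ⟨j, hj, _, ⟨c, rfl⟩, rfl⟩
  · rintro ⟨j, hj, _, ⟨c, rfl⟩, rfl⟩
    exact ⟨j, hj, c, rfl⟩

theorem mem_unitize_iff (hJ : IsClosedTwoSidedIdeal J) {d : A} :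
    d ∈ unitize A J ↔ ∃ c : ℂ, d - c • (1 : A) ∈ J := by
  constructor
  · rintro ⟨j, hj, c, rfl⟩
    exact ⟨c, by simpa using hj⟩
  · rintro ⟨c, hc⟩
    exact ⟨_, hc, c, by simp⟩

theorem chi_mul (hJ : IsClosedTwoSidedIdeal J) {d e : A} {c c' : ℂ} (h : d - c • (1 : A) ∈ J)
    (h' : e - c' • (1 : A) ∈ J) : d * e - (c * c') • (1 : A) ∈ J := by
  have : d * e - (c * c') • (1 : A) = (d - c • (1 : A)) * e + c • (e - c' • (1 : A)) := by
    simp [sub_mul, smul_sub, mul_smul]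
  rw [this]
  exact hJ.add_mem _ (hJ.mul_mem_right _ _ h) _ (hJ.smul_mem _ h')

theorem chi_add (hJ : IsClosedTwoSidedIdeal J) {d e : A} {c c' : ℂ} (h : d - c • (1 : A) ∈ J)
    (h' : e - c' • (1 : A) ∈ J) : d + e - (c + c') • (1 : A) ∈ J := by
  have : d + e - (c + c') • (1 : A) = (d - c • (1 : A)) + (e - c' • (1 : A)) := by
    rw [add_smul]; abel
  rw [this]
  exact hJ.add_mem _ h _ h'

theorem chi_star (hJ : IsClosedTwoSidedIdeal J) {d : A} {c : ℂ} (h : d - c • (1 : A) ∈ J) :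
    star d - (star c) • (1 : A) ∈ J := by
  simpa using hJ.star_mem h

theorem subset_cstarPlus_X {x : A} (hx : x ∈ X) : x ∈ cstarPlus A X J :=
  StarSubalgebra.le_topologicalClosure _ (StarAlgebra.subset_adjoin ℂ _
    (Or.inl (StarSubalgebra.le_topologicalClosure _ (StarAlgebra.subset_adjoin ℂ _ hx))))

theorem subset_cstarPlus_J {x : A} (hx : x ∈ J) : x ∈ cstarPlus A X J :=
  StarSubalgebra.le_topologicalClosure _ (StarAlgebra.subset_adjoin ℂ _ (Or.inr hx))

theorem isClosed_cstarPlus : IsClosed (cstarPlus A X J : Set A) :=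
  StarSubalgebra.isClosed_topologicalClosure _

/-- The ambient closed star subalgebra of matrices of the expected shape. -/
def shape (X : Set A) (hJ : IsClosedTwoSidedIdeal J) :
    StarSubalgebra ℂ (Matrix (Fin 2) (Fin 2) A) where
  carrier := {m | m 0 0 ∈ cstarPlus A X J ∧ m 0 1 ∈ J ∧ m 1 0 ∈ J ∧ m 1 1 ∈ unitize A J}
  mul_mem' := by
    rintro m n ⟨h1, h2, h3, h4⟩ ⟨k1, k2, k3, k4⟩
    simp only [Set.mem_ofPred_eq, Matrix.mul_apply, Fin.sum_univ_two]
    refine ⟨add_mem (mul_mem h1 k1) (subset_cstarPlus_J (hJ.mul_mem_left _ _ k3)),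
      hJ.add_mem _ (hJ.mul_mem_left _ _ k2) _ (hJ.mul_mem_right _ _ h2),
      hJ.add_mem _ (hJ.mul_mem_right _ _ h3) _ (hJ.mul_mem_left _ _ k3), ?_⟩
    rw [mem_unitize_iff hJ] at *
    obtain ⟨c, hc⟩ := h4
    obtain ⟨d, hd⟩ := k4
    refine ⟨c * d, ?_⟩
    rw [add_sub_assoc]
    exact hJ.add_mem _ (hJ.mul_mem_left _ _ k2) _ (chi_mul hJ hc hd)
  add_mem' := by
    rintro m n ⟨h1, h2, h3, h4⟩ ⟨k1, k2, k3, k4⟩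
    refine ⟨add_mem h1 k1, hJ.add_mem _ h2 _ k2, hJ.add_mem _ h3 _ k3, ?_⟩
    rw [mem_unitize_iff hJ] at *
    obtain ⟨c, hc⟩ := h4
    obtain ⟨d, hd⟩ := k4
    exact ⟨c + d, chi_add hJ hc hd⟩
  algebraMap_mem' := by
    intro r
    simp only [Set.mem_ofPred_eq, Matrix.algebraMap_matrix_apply]
    refine ⟨by simpa using (cstarPlus A X J).algebraMap_mem r, by simpa using hJ.zero_mem,
      by simpa using hJ.zero_mem, ?_⟩
    rw [mem_unitize_iff hJ]
    exact ⟨r, by simpa [Algebra.algebraMap_eq_smul_one] using hJ.zero_mem⟩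
  star_mem' := by
    rintro m ⟨h1, h2, h3, h4⟩
    simp only [Set.mem_ofPred_eq, Matrix.star_apply]
    refine ⟨star_mem h1, hJ.star_mem h3, hJ.star_mem h2, ?_⟩
    rw [mem_unitize_iff hJ] at *
    obtain ⟨c, hc⟩ := h4
    exact ⟨_, chi_star hJ hc⟩

theorem calg_le_shape (hJ : IsClosedTwoSidedIdeal J) : calg A X J ≤ shape X hJ := by
  refine StarSubalgebra.topologicalClosure_minimal (StarAlgebra.adjoin_le ?_) ?_
  · rintro m ⟨h1, h2, h3, h4⟩
    exact ⟨subset_cstarPlus_X h1, h2, h3, h4⟩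
  · have hc : ∀ i j : Fin 2, Continuous fun m : Matrix (Fin 2) (Fin 2) A => m i j :=
      fun i j => by fun_prop
    exact (isClosed_cstarPlus.preimage (hc 0 0)).inter ((hJ.isClosed.preimage (hc 0 1)).inter
      ((hJ.isClosed.preimage (hc 1 0)).inter ((isClosed_unitize hJ).preimage (hc 1 1))))

theorem opSys_subset {m : Matrix (Fin 2) (Fin 2) A} (h : m ∈ opSys A X J) : m ∈ calg A X J :=
  StarSubalgebra.le_topologicalClosure _ (StarAlgebra.subset_adjoin ℂ _ h)

/-- corner embedding -/
def corner (a : A) : Matrix (Fin 2) (Fin 2) A := !![a, 0; 0, 0]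

theorem zero_mem_unitize (hJ : IsClosedTwoSidedIdeal J) : (0 : A) ∈ unitize A J :=
  ⟨0, hJ.zero_mem, 0, by simp⟩

theorem corner_mul (a b : A) : corner (a * b) = corner a * corner b := by
  simp [corner]

theorem corner_add (a b : A) : corner (a + b) = corner a + corner b := by
  simp [corner]

theorem corner_smul (c : ℂ) (b : A) : corner (c • b) = c • corner b := by
  simp [corner]

theorem corner_star (a : A) : corner (star a) = star (corner a) := by
  ext i j; fin_cases i <;> fin_cases j <;> simp [corner, Matrix.star_apply]

/-- elements whose corner lies in `calg` -/
def cornerAlg (hX : IsOperatorSystem X) (hJ : IsClosedTwoSidedIdeal J) : StarSubalgebra ℂ A where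
  carrier := {a | corner a ∈ calg A X J}
  mul_mem' := by
    intro a b ha hb
    simp only [Set.mem_ofPred_eq, corner_mul] at *
    exact mul_mem ha hb
  add_mem' := by
    intro a b ha hb
    simp only [Set.mem_ofPred_eq, corner_add] at *
    exact add_mem ha hb
  algebraMap_mem' := by
    intro r
    refine opSys_subset ⟨?_, hJ.zero_mem, hJ.zero_mem, zero_mem_unitize hJ⟩
    rw [Algebra.algebraMap_eq_smul_one]
    exact hX.smul_mem _ _ hX.one_mem
  star_mem' := by
    intro a ha
    simp only [Set.mem_ofPred_eq, corner_star] at *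
    exact star_mem ha

theorem isClosed_cornerAlg (hX : IsOperatorSystem X) (hJ : IsClosedTwoSidedIdeal J) :
    IsClosed (cornerAlg hX hJ : Set A) := by
  have hc : Continuous (corner : A → Matrix (Fin 2) (Fin 2) A) := by
    refine continuous_matrix fun i j => ?_
    fin_cases i <;> fin_cases j <;> simp [corner] <;> fun_prop
  exact (StarSubalgebra.isClosed_topologicalClosure _).preimage hc

theorem corner_mem (hX : IsOperatorSystem X) (hJ : IsClosedTwoSidedIdeal J) {a : A}
    (ha : a ∈ cstarPlus A X J) : corner a ∈ calg A X J := by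
  have hle : cstarPlus A X J ≤ cornerAlg hX hJ := by
    refine StarSubalgebra.topologicalClosure_minimal (StarAlgebra.adjoin_le ?_)
      (isClosed_cornerAlg hX hJ)
    refine Set.union_subset ?_ ?_
    · refine StarSubalgebra.topologicalClosure_minimal (StarAlgebra.adjoin_le ?_)
        (isClosed_cornerAlg hX hJ)
      intro x hx
      exact opSys_subset ⟨hx, hJ.zero_mem, hJ.zero_mem, zero_mem_unitize hJ⟩
    · intro j hj
      refine mem_of_approx (isClosed_cornerAlg hX hJ) j fun g => ?_
      have hk : star j * j * g ∈ J := hJ.mul_mem_right _ _ (hJ.mul_mem_left _ _ hj)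
      have h0 : (0 : A) ∈ X := by simpa using hX.smul_mem 0 _ hX.one_mem
      have e : corner (j * (star j * j * g)) =
          (!![0, j; 0, 0] : Matrix (Fin 2) (Fin 2) A) * !![0, 0; star j * j * g, 0] := by
        simp [corner]
      change corner (j * (star j * j * g)) ∈ calg A X J
      rw [e]
      exact mul_mem (opSys_subset ⟨h0, hj, hJ.zero_mem, zero_mem_unitize hJ⟩)
        (opSys_subset ⟨h0, hJ.zero_mem, hk, zero_mem_unitize hJ⟩)
  exact hle ha

end structural

theorem contr_aux {C : Type*} [CStarAlgebra C] {H : Type*} [NormedAddCommGroup H]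
    [InnerProductSpace ℂ H] [CompleteSpace H] (φ : C → (H →L[ℂ] H))
    (hsmul : ∀ (c : ℂ) (x : C), φ (c • x) = c • φ x) (hcp : IsCompletelyPositive φ)
    (h1 : ‖φ 1‖ ≤ 1) (a : C) : ‖φ a‖ ≤ ‖a‖ := by
  rcases eq_or_ne a 0 with rfl | ha
  · have := hsmul 0 0
    simp only [zero_smul] at this
    simp [this]
  have ht : 0 < ‖a‖ := norm_pos_iff.2 ha
  obtain ⟨s, hs⟩ := sqrt_aux a
  obtain ⟨z, hz⟩ := hcp 2 !![(‖a‖ : ℂ) • (1 : C), a; 0, s]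
  generalize ‖a‖ = t at *
  have e00 := congrFun (congrFun hz 0) 0
  have e01 := congrFun (congrFun hz 0) 1
  have e11 := congrFun (congrFun hz 1) 1
  simp only [Matrix.map_apply, Matrix.mul_apply, Fin.sum_univ_two, Matrix.star_apply] at e00 e01 e11
  simp [hs, hsmul, smul_smul] at e00 e01 e11
  have hR : ∀ (r : ℝ) (x : C), φ (r • x) = (r : ℂ) • φ x := fun r x => by
    rw [← hsmul, Complex.coe_smul]
  rw [hR] at e00 e01
  rw [show ((t * t : ℝ) : ℂ) = (t : ℂ) ^ 2 by push_cast; ring] at e00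
  have key : ∀ (p q : H →L[ℂ] H), ((t : ℂ) ^ 2) • φ 1 = star p * p + star q * q →
      ∀ u : H, ‖p u‖ ^ 2 + ‖q u‖ ^ 2 ≤ t ^ 2 * ‖u‖ ^ 2 := by
    intro p q h u
    have h2 : inner ℂ u ((((t : ℂ) ^ 2) • φ 1) u) = ((‖p u‖ ^ 2 + ‖q u‖ ^ 2 : ℝ) : ℂ) := by
      rw [h]
      simp [ContinuousLinearMap.star_eq_adjoint, inner_add_right,
        ContinuousLinearMap.adjoint_inner_right, inner_self_eq_norm_sq_to_K]
    have h3 : ‖inner ℂ u ((((t : ℂ) ^ 2) • φ 1) u)‖ ≤ t ^ 2 * ‖u‖ ^ 2 := by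
      calc _ ≤ ‖u‖ * ‖(((t : ℂ) ^ 2) • φ 1) u‖ := norm_inner_le_norm _ _
        _ ≤ ‖u‖ * (t ^ 2 * (1 * ‖u‖)) := by
          gcongr
          simp only [smul_apply, norm_smul, norm_pow, Complex.norm_real,
            Real.norm_eq_abs, sq_abs]
          gcongr
          exact (φ 1).le_of_opNorm_le h1 u
        _ = _ := by ring
    rw [h2, Complex.norm_real, Real.norm_eq_abs] at h3
    exact (le_abs_self _).trans h3
  have k0 := key _ _ e00
  have k1 := key _ _ e11
  refine ContinuousLinearMap.opNorm_le_bound _ ht.le fun v => ?_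
  set w := φ a v with hw
  have h4 : (t : ℂ) * inner ℂ w w = inner ℂ (z 0 0 w) (z 0 1 v) + inner ℂ (z 1 0 w) (z 1 1 v) := by
    have : (t : ℂ) • w = (star (z 0 0) * z 0 1 + star (z 1 0) * z 1 1) v := by rw [← e01]; rfl
    rw [← inner_smul_right, this]
    simp [ContinuousLinearMap.star_eq_adjoint, inner_add_right,
        ContinuousLinearMap.adjoint_inner_right]
  have h5 : t * ‖w‖ ^ 2 ≤ ‖z 0 0 w‖ * ‖z 0 1 v‖ + ‖z 1 0 w‖ * ‖z 1 1 v‖ := by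
    have h6 := congrArg norm h4
    rw [inner_self_eq_norm_sq_to_K] at h6
    simp [abs_of_pos ht] at h6
    rw [h6]
    exact (norm_add_le _ _).trans (add_le_add (norm_inner_le_norm _ _) (norm_inner_le_norm _ _))
  have h0w := k0 w
  have h1v := k1 v
  generalize ‖z 0 0 w‖ = p at *
  generalize ‖z 1 0 w‖ = q at *
  generalize ‖z 0 1 v‖ = r at *
  generalize ‖z 1 1 v‖ = x at *
  have hv := norm_nonneg v
  have hww := norm_nonneg w
  have h7 : (p * r + q * x) ^ 2 ≤ (t ^ 2 * ‖w‖ * ‖v‖) ^ 2 := by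
    calc _ ≤ (p ^ 2 + q ^ 2) * (r ^ 2 + x ^ 2) := by nlinarith [sq_nonneg (p * x - q * r)]
      _ ≤ (t ^ 2 * ‖w‖ ^ 2) * (t ^ 2 * ‖v‖ ^ 2) := by gcongr
      _ = _ := by ring
  have h8 := (le_abs_self _).trans (abs_le_of_sq_le_sq h7 (by positivity))
  rcases hww.eq_or_lt with h | h
  · rw [← h]; positivity
  · have h9 : t * ‖w‖ * ‖w‖ ≤ t * ‖w‖ * (t * ‖v‖) := by nlinarith
    exact le_of_mul_le_mul_left h9 (by positivity)

theorem contr_sub {A : Type*} [CStarAlgebra A] (X J : Set A) {H : Type*} [NormedAddCommGroup H]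
    [InnerProductSpace ℂ H] [CompleteSpace H] (φ : ↥(cstarPlus A X J) → (H →L[ℂ] H))
    (hsmul : ∀ (c : ℂ) (x : ↥(cstarPlus A X J)), φ (c • x) = c • φ x)
    (hcp : IsCompletelyPositive φ)
    (h1 : ‖φ 1‖ ≤ 1) (a : ↥(cstarPlus A X J)) : ‖φ a‖ ≤ ‖a‖ := by
  have : IsClosed (cstarPlus A X J : Set A) := isClosed_cstarPlus
  exact contr_aux (C := ↥(cstarPlus A X J)) φ hsmul hcp h1 a

section main

variable {A : Type*} [CStarAlgebra A] {X J : Set A}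
    {H : Type*} [NormedAddCommGroup H] [InnerProductSpace ℂ H] [CompleteSpace H]

theorem norm_proj_le {P : H →L[ℂ] H} (h : star P * P = P) : ‖P‖ ≤ 1 := by
  have h2 : ‖P‖ = ‖P‖ * ‖P‖ := by
    conv_lhs => rw [← h]
    exact CStarRing.norm_star_mul_self
  by_contra! h3
  nlinarith

theorem main_forward (hX : IsOperatorSystem X) (hJ : IsClosedTwoSidedIdeal J)
    (hJ1 : (1 : A) ∉ J)
    (ρ : ↥(calg A X J) → (H →L[ℂ] H))
    (π : ↥(cstarPlus A X J) → (H →L[ℂ] H))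
    (hπ : IsStarRep π)
    (hadapted : IsAdaptedPair X J ρ π) (hU : HasUEP X J ρ)
    (φ : ↥(cstarPlus A X J) → (H →L[ℂ] H))
    (hadd : ∀ x y, φ (x + y) = φ x + φ y)
    (hsmul : ∀ (c : ℂ) (x : ↥(cstarPlus A X J)), φ (c • x) = c • φ x)
    (hcp : IsCompletelyPositive φ)
    (hφX : ∀ x : ↥(cstarPlus A X J), (x : A) ∈ X → φ x = π x) : φ = π := by
  have hsh : ∀ m : ↥(calg A X J), _ := fun m => calg_le_shape hJ m.2
  have hex : ∀ m : ↥(calg A X J), ∃ c : ℂ, (m : Matrix (Fin 2) (Fin 2) A) 1 1 - c • (1 : A) ∈ J :=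
    fun m => (mem_unitize_iff hJ).1 (hsh m).2.2.2
  choose χ hχ using hex
  have huniq : ∀ {d : A} {c c' : ℂ}, d - c • (1 : A) ∈ J → d - c' • (1 : A) ∈ J → c = c' := by
    intro d c c' h h'
    by_contra hne
    have h2 := hJ.smul_mem (c - c')⁻¹ (hJ.sub_mem h' h)
    have h3 : d - c' • (1 : A) - (d - c • (1 : A)) = (c - c') • (1 : A) := by
      rw [sub_smul]; abel
    rw [h3, smul_smul, inv_mul_cancel₀ (sub_ne_zero.2 hne), one_smul] at h2
    exact hJ1 h2
  let f : ↥(calg A X J) → ↥(cstarPlus A X J) := fun m => ⟨_, (hsh m).1⟩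
  let f' : ↥(calg A X J) → ↥(cstarPlus A X J) := fun m => ⟨_, subset_cstarPlus_J (hsh m).2.2.1⟩
  have h1X : φ 1 = π 1 := hφX 1 hX.one_mem
  let P := π 1
  have hPs : star P = P := by
    change star (π 1) = π 1
    rw [← hπ.map_star, star_one]
  have hPP : P * P = P := by
    change π 1 * π 1 = π 1
    rw [← hπ.map_mul, mul_one]
  have hQ : star (1 - P) * (1 - P) = 1 - P := by
    rw [star_sub, star_one, hPs, sub_mul, mul_sub, mul_sub, hPP]; simp
  let Ψ : ↥(calg A X J) → (H →L[ℂ] H) := fun m => φ (f m) + χ m • (1 - P)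
  have hχadd : ∀ x y, χ (x + y) = χ x + χ y := fun x y =>
    huniq (hχ (x + y)) (chi_add hJ (hχ x) (hχ y))
  have hχsmul : ∀ (c : ℂ) x, χ (c • x) = c * χ x := fun c x => by
    refine huniq (hχ (c • x)) ?_
    have := hJ.smul_mem c (hχ x)
    rwa [smul_sub, smul_smul] at this
  have hχone : χ 1 = 1 := huniq (hχ 1) (by simpa using hJ.zero_mem)
  have hχmul : ∀ x y, χ (star x * y) = star (χ x) * χ y := fun x y => by
    refine huniq (hχ (star x * y)) ?_
    have h := chi_mul hJ (chi_star hJ (hχ x)) (hχ y)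
    have h2 := hJ.mul_mem_left (star ((x : Matrix (Fin 2) (Fin 2) A) 0 1)) _ (hsh y).2.1
    have h3 := hJ.add_mem _ h2 _ h
    have e : ((star x * y : ↥(calg A X J)) : Matrix (Fin 2) (Fin 2) A) 1 1
        = star ((x : Matrix (Fin 2) (Fin 2) A) 0 1) * (y : Matrix (Fin 2) (Fin 2) A) 0 1
          + star ((x : Matrix (Fin 2) (Fin 2) A) 1 1) * (y : Matrix (Fin 2) (Fin 2) A) 1 1 := by
      simp [Matrix.mul_apply, Fin.sum_univ_two, Matrix.star_apply]
    rw [e, add_sub_assoc]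
    exact h3
  have hχsum : ∀ (n : ℕ) (g : Fin n → ↥(calg A X J)), χ (∑ k, g k) = ∑ k, χ (g k) := by
    intro n g
    exact map_sum (AddMonoidHom.mk' χ hχadd) g Finset.univ
  have hfadd : ∀ x y, f (x + y) = f x + f y := fun x y => rfl
  have hfsum : ∀ (n : ℕ) (g : Fin n → ↥(calg A X J)), f (∑ k, g k) = ∑ k, f (g k) := by
    intro n g
    exact map_sum (AddMonoidHom.mk' f hfadd) g Finset.univ
  have hfmul : ∀ x y, f (star x * y) = star (f x) * f y + star (f' x) * f' y := fun x y => by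
    apply Subtype.ext
    simp [f, f', Matrix.mul_apply, Fin.sum_univ_two, Matrix.star_apply]
  have hΨ : IsUCPMap Ψ := by
    refine ⟨fun x y => ?_, fun c x => ?_, ?_, ?_⟩
    · simp only [Ψ]
      rw [hfadd, hadd, hχadd, add_smul]; abel
    · simp only [Ψ]
      have : f (c • x) = c • f x := rfl
      rw [this, hsmul, hχsmul, smul_add, mul_smul]
    · intro n y
      obtain ⟨z0, hz0⟩ := hcp n (y.map f)
      obtain ⟨z1, hz1⟩ := hcp n (y.map f')
      obtain ⟨z2, hz2⟩ := sum_aux z0 z1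
      let w : Matrix (Fin n) (Fin n) (H →L[ℂ] H) := y.map fun m => χ m • (1 - P)
      obtain ⟨z3, hz3⟩ := sum_aux z2 w
      refine ⟨z3, ?_⟩
      rw [← hz3, ← hz2, ← hz0, ← hz1]
      ext1 i j
      simp only [Matrix.map_apply, Matrix.add_apply, Ψ]
      have e1 : f ((star y * y) i j) = (star (y.map f) * y.map f) i j +
          (star (y.map f') * y.map f') i j := by
        simp only [Matrix.mul_apply, Matrix.star_apply, Matrix.map_apply]
        rw [hfsum, ← Finset.sum_add_distrib]
        simp only [hfmul]
      have e2 : χ ((star y * y) i j) • (1 - P) = (star w * w) i j := by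
        simp only [Matrix.mul_apply, Matrix.star_apply, Matrix.map_apply, w]
        rw [hχsum, Finset.sum_smul]
        refine Finset.sum_congr rfl fun k _ => ?_
        rw [hχmul, star_smul, smul_mul_smul_comm, hQ]
      rw [e1, e2, hadd]
    · simp only [Ψ]
      have : f 1 = 1 := rfl
      rw [this, hχone, h1X]
      simp [P]
  have hΨS : ∀ m : ↥(calg A X J), (m : Matrix (Fin 2) (Fin 2) A) ∈ opSys A X J → Ψ m = ρ m := by
    intro m hm
    have h := hadapted m (χ m) (f m + (-χ m) • 1) (hχ m) (by simp [f, sub_eq_add_neg])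
    rw [sub_eq_iff_eq_add] at h
    rw [h, hπ.map_add, hπ.map_smul, ← hφX (f m) hm.1]
    simp only [Ψ, P]
    rw [smul_sub, neg_smul]; abel
  have hEq := hU Ψ hΨ hΨS
  funext a
  let m : ↥(calg A X J) := ⟨corner a, corner_mem hX hJ a.2⟩
  have h0 : (m : Matrix (Fin 2) (Fin 2) A) 1 1 - (0 : ℂ) • (1 : A) ∈ J := by
    simpa [m, corner] using hJ.zero_mem
  have hm0 : χ m = 0 := huniq (hχ m) h0
  have h := hadapted m 0 a h0 (by simp [m, corner])
  rw [← hEq] at h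
  simp only [Ψ, hm0, zero_smul, add_zero, sub_zero] at h
  exact h

theorem main_backward (hX : IsOperatorSystem X) (hJ : IsClosedTwoSidedIdeal J)
    (ρ : ↥(calg A X J) → (H →L[ℂ] H)) (hρ : IsStarRep ρ)
    (π : ↥(cstarPlus A X J) → (H →L[ℂ] H))
    (hπ : IsStarRep π)
    (hadapted : IsAdaptedPair X J ρ π)
    (hU : ∀ φ : ↥(cstarPlus A X J) → (H →L[ℂ] H),
        (∀ x y, φ (x + y) = φ x + φ y) →
        (∀ (c : ℂ) (x : ↥(cstarPlus A X J)), φ (c • x) = c • φ x) →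
        IsCompletelyPositive φ →
        (∀ x : ↥(cstarPlus A X J), ‖φ x‖ ≤ ‖x‖) →
        (∀ x : ↥(cstarPlus A X J), (x : A) ∈ X → φ x = π x) →
        φ = π) : HasUEP X J ρ := by
  intro Ψ hΨ hΨS
  let ι : ↥(cstarPlus A X J) → ↥(calg A X J) := fun a => ⟨corner a, corner_mem hX hJ a.2⟩
  have hιadd : ∀ x y, ι (x + y) = ι x + ι y := fun x y => Subtype.ext (corner_add _ _)
  have hιmul : ∀ x y, ι (star x * y) = star (ι x) * ι y := fun x y => Subtype.ext <| by
    change corner (star (x : A) * y) = star (corner (x : A)) * corner (y : A)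
    rw [corner_mul, corner_star]
  have hιsmul : ∀ (c : ℂ) x, ι (c • x) = c • ι x := fun c x => Subtype.ext (corner_smul _ _)
  have hιsum : ∀ (n : ℕ) (g : Fin n → ↥(cstarPlus A X J)), ι (∑ k, g k) = ∑ k, ι (g k) := by
    intro n g
    exact map_sum (AddMonoidHom.mk' ι hιadd) g Finset.univ
  have hρι : ∀ a, ρ (ι a) = π a := by
    intro a
    have h := hadapted (ι a) 0 a (by simpa [ι, corner] using hJ.zero_mem) (by simp [ι, corner])
    simpa using h
  have hφX : ∀ x : ↥(cstarPlus A X J), (x : A) ∈ X → Ψ (ι x) = π x := by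
    intro x hx
    rw [hΨS (ι x) ⟨hx, hJ.zero_mem, hJ.zero_mem, zero_mem_unitize hJ⟩, hρι]
  have hsm : ∀ (c : ℂ) (x : ↥(cstarPlus A X J)), Ψ (ι (c • x)) = c • Ψ (ι x) := fun c x => by
    rw [hιsmul, hΨ.map_smul]
  have hcp : IsCompletelyPositive fun a => Ψ (ι a) := by
    intro n y
    obtain ⟨z, hz⟩ := hΨ.cp n (y.map ι)
    refine ⟨z, ?_⟩
    rw [← hz]
    ext1 i j
    simp only [Matrix.map_apply, Matrix.mul_apply, Matrix.star_apply]
    rw [hιsum]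
    simp only [hιmul]
  have hφ := hU (fun a => Ψ (ι a)) (fun x y => by rw [hιadd, hΨ.map_add]) hsm hcp
    (contr_sub X J (fun a => Ψ (ι a)) hsm hcp (by
      refine norm_proj_le ?_
      rw [hφX 1 hX.one_mem, ← hπ.map_star, ← hπ.map_mul]
      simp)) hφX
  funext m
  obtain ⟨h1, h2, h3, h4⟩ := calg_le_shape hJ m.2
  let r : ↥(calg A X J) := m - ι ⟨_, h1⟩
  have hr : (r : Matrix (Fin 2) (Fin 2) A) ∈ opSys A X J := by
    have h0 : (0 : A) ∈ X := by simpa using hX.smul_mem 0 _ hX.one_mem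
    refine ⟨?_, ?_, ?_, ?_⟩
    · simpa [r, ι, corner] using h0
    · simpa [r, ι, corner] using h2
    · simpa [r, ι, corner] using h3
    · simpa [r, ι, corner] using h4
  have hm : m = ι ⟨_, h1⟩ + r := by simp [r]
  rw [hm, hΨ.map_add, hρ.map_add, hΨS r hr, hρι]
  exact congrArg (· + ρ r) (congrFun hφ _)

end main

/-- Theorem 2.8: let `ρ : B(X,J) → B(H)` be a unital *-representation
annihilating `M₂(J)` and let `π : C*(X)+J → B(H)` be the (unique) *-representation
annihilating `J` such that the pair `(ρ, π)` is `(X,J)`-adapted.  Then `ρ` has the unique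
extension property with respect to `S(X,J)` if and only if `π` is the unique contractive
completely positive extension of `π|_X` to `C*(X)+J`. -/
theorem stmt6 {A : Type*} [CStarAlgebra A] (X J : Set A)
    (hX : IsOperatorSystem X) (hJ : IsClosedTwoSidedIdeal J)
    {H : Type*} [NormedAddCommGroup H] [InnerProductSpace ℂ H] [CompleteSpace H]
    (ρ : ↥(calg A X J) → (H →L[ℂ] H))
    (hρ : IsUnitalStarRep ρ) (hρ_ann : AnnihilatesM2 X J ρ)
    (π : ↥(cstarPlus A X J) → (H →L[ℂ] H))
    (hπ : IsStarRep π) (hπ_ann : AnnihilatesJ X J π)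
    (hadapted : IsAdaptedPair X J ρ π) :
    HasUEP X J ρ ↔
      (∀ φ : ↥(cstarPlus A X J) → (H →L[ℂ] H),
        (∀ x y, φ (x + y) = φ x + φ y) →
        (∀ (c : ℂ) (x : ↥(cstarPlus A X J)), φ (c • x) = c • φ x) →
        IsCompletelyPositive φ →
        (∀ x : ↥(cstarPlus A X J), ‖φ x‖ ≤ ‖x‖) →
        (∀ x : ↥(cstarPlus A X J), (x : A) ∈ X → φ x = π x) →
        φ = π) := by
  by_cases hJ1 : (1 : A) ∈ J
  · have h0 : (1 : H →L[ℂ] H) = 0 := by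
      rw [← hρ.map_one]
      refine hρ_ann 1 fun i j => ?_
      have := hJ.mul_mem_left (((1 : ↥(calg A X J)) : Matrix (Fin 2) (Fin 2) A) i j) _ hJ1
      simpa using this
    have hs : Subsingleton (H →L[ℂ] H) := subsingleton_of_zero_eq_one h0.symm
    exact ⟨fun _ φ _ _ _ _ _ => Subsingleton.elim _ _, fun _ Ψ _ _ => Subsingleton.elim _ _⟩
  · exact ⟨fun hU φ hadd hsmul hcp _ hφX =>
      main_forward hX hJ hJ1 ρ π hπ hadapted hU φ hadd hsmul hcp hφX,
      fun hU => main_backward hX hJ ρ hρ.toIsStarRep π hπ hadapted hU⟩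

end ArvesonCounterexample
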